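/- Soundness of rule R13 (Theorem 1, first part): Let H be a partial mixed graph and M a completion of H. Suppose A and B are adjacent in H and the mark at A on the edge A–B is a circle. Let S_A = {A} ∪ {V : V is adjacent to A in H and the edge V–A has an arrowhead at A}. If there is an uncovered possible directed path ⟨A, B, …, K⟩ in H whose second vertex is B and whose endpoint K is an ancestor of S_A in H, then in M the edge between A and B has an arrowhead at A (in particular, A → B does not hold in M). -/

import Mathlib

/-- Marks at edge ends in a partial mixed graph. -/
inductive Mark : Type
  | tail
  | arrow
  | circle
deriving DecidableEq

/-- A partial mixed graph (PMG): a symmetric irreflexive adjacency relation together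
with, for each ordered pair `(a, b)` of adjacent vertices, a mark `mark a b` at `b` on
the edge `a–b`, such that no edge has tails at both endpoints. -/
structure PMG (V : Type) where
  adj : V → V → Prop
  symm : ∀ a b, adj a b → adj b a
  irrefl : ∀ a, ¬ adj a a
  mark : V → V → Mark
  noDoubleTail : ∀ a b, adj a b → ¬ (mark a b = Mark.tail ∧ mark b a = Mark.tail)

namespace PMG

variable {V : Type}

/-- `a → b`: adjacent, tail at `a`, arrowhead at `b`. -/
def dir (G : PMG V) (a b : V) : Prop :=
  G.adj a b ∧ G.mark b a = Mark.tail ∧ G.mark a b = Mark.arrow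

/-- `a ↔ b`: adjacent, arrowheads at both endpoints. -/
def bidir (G : PMG V) (a b : V) : Prop :=
  G.adj a b ∧ G.mark b a = Mark.arrow ∧ G.mark a b = Mark.arrow

/-- `a` is an ancestor of `b`: `a = b` or there is a directed path from `a` to `b`. -/
def Anc (G : PMG V) (a b : V) : Prop :=
  Relation.ReflTransGen G.dir a b

/-- `a` is an ancestor of some vertex of the set `S`. -/
def AncSet (G : PMG V) (a : V) (S : Set V) : Prop :=
  ∃ v ∈ S, G.Anc a v

/-- A mixed graph: a PMG with no circle marks. -/
def IsMixed (G : PMG V) : Prop :=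
  ∀ a b, G.adj a b → G.mark a b ≠ Mark.circle

/-- Ancestral: no directed cycles and no almost directed cycles. -/
def Ancestral (G : PMG V) : Prop :=
  ∀ a b, G.Anc a b → a ≠ b → ¬ G.dir b a ∧ ¬ G.bidir a b

/-- Unshielded collider `(a, b, c)`: `a, c` both adjacent to `b`, `a` and `c`
distinct and nonadjacent, arrowheads at `b` on both edges. -/
def UnshieldedCollider (G : PMG V) (a b c : V) : Prop :=
  a ≠ c ∧ G.adj a b ∧ G.adj c b ∧ ¬ G.adj a c ∧
    G.mark a b = Mark.arrow ∧ G.mark c b = Mark.arrow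

/-- `M` is a completion of the PMG `H`: same vertices and adjacencies, all non-circle
marks of `H` occur identically in `M`, `M` is an ancestral mixed graph, and every
unshielded collider of `M` is already an unshielded collider of `H`. -/
def Completion (H M : PMG V) : Prop :=
  (∀ a b, M.adj a b ↔ H.adj a b) ∧
  (∀ a b, H.adj a b → H.mark a b ≠ Mark.circle → M.mark a b = H.mark a b) ∧
  M.IsMixed ∧ M.Ancestral ∧
  (∀ a b c, M.UnshieldedCollider a b c → H.UnshieldedCollider a b c)

/-- An edge usable in a possible directed path from `a` to `b`:
adjacent, no arrowhead at `a`, no tail at `b`. -/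
def possEdge (G : PMG V) (a b : V) : Prop :=
  G.adj a b ∧ G.mark b a ≠ Mark.arrow ∧ G.mark a b ≠ Mark.tail

/-- A circle edge: adjacent with circle marks at both endpoints. -/
def circleEdge (G : PMG V) (a b : V) : Prop :=
  G.adj a b ∧ G.mark a b = Mark.circle ∧ G.mark b a = Mark.circle

/-- `p 0, …, p n` is a path: distinct vertices, consecutive ones adjacent. -/
def IsPathOn (G : PMG V) (p : ℕ → V) (n : ℕ) : Prop :=
  (∀ i ≤ n, ∀ j ≤ n, p i = p j → i = j) ∧ ∀ i < n, G.adj (p i) (p (i+1))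

/-- `p 0, …, p n` is a possible directed path. -/
def IsPossDirPathOn (G : PMG V) (p : ℕ → V) (n : ℕ) : Prop :=
  (∀ i ≤ n, ∀ j ≤ n, p i = p j → i = j) ∧ ∀ i < n, G.possEdge (p i) (p (i+1))

/-- `p 0, …, p n` is a circle path. -/
def IsCirclePathOn (G : PMG V) (p : ℕ → V) (n : ℕ) : Prop :=
  (∀ i ≤ n, ∀ j ≤ n, p i = p j → i = j) ∧ ∀ i < n, G.circleEdge (p i) (p (i+1))

/-- The path `p 0, …, p n` is uncovered: any two nonconsecutive neighbours of an
internal vertex are nonadjacent. -/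
def UncoveredOn (G : PMG V) (p : ℕ → V) (n : ℕ) : Prop :=
  ∀ i, i + 2 ≤ n → ¬ G.adj (p i) (p (i+2))

/-- `F_x` relative to `V'`: the vertices of `V'` adjacent to `x` whose edge carries
a circle or an arrowhead at `x`. -/
def Fset (G : PMG V) (V' : Set V) (x : V) : Set V :=
  {v | v ∈ V' ∧ G.adj v x ∧ (G.mark v x = Mark.circle ∨ G.mark v x = Mark.arrow)}

/-- `p 0, …, p n` is an unbridged path relative to `V'` in `G`: an uncovered circle
path with at least one edge, lying in `G[−V']`, with
`F_{p 0} \ F_{p 1} ≠ ∅` and `F_{p n} \ F_{p (n-1)} ≠ ∅`. -/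
def UnbridgedOn (G : PMG V) (V' : Set V) (p : ℕ → V) (n : ℕ) : Prop :=
  1 ≤ n ∧ G.IsCirclePathOn p n ∧ G.UncoveredOn p n ∧
  (∀ i ≤ n, p i ∉ V') ∧
  (G.Fset V' (p 0) \ G.Fset V' (p 1)).Nonempty ∧
  (G.Fset V' (p n) \ G.Fset V' (p (n-1))).Nonempty

/-- The set `S_A`: `A` together with all vertices adjacent to `A` whose edge has an
arrowhead at `A`. -/
def SA (G : PMG V) (A : V) : Set V :=
  {A} ∪ {v | G.adj v A ∧ G.mark v A = Mark.arrow}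

end PMG

/-- **Soundness of rule R13.** If `A ∘–* B` in the PMG `H` and there is an uncovered
possible directed path `⟨A, B, …, K⟩` in `H` with `K` an ancestor of `S_A` in `H`,
then every completion `M` of `H` has an arrowhead at `A` on the edge `A–B`
(in particular `A → B` does not hold in `M`). -/
theorem R13_sound {V : Type} (H M : PMG V) (hHM : PMG.Completion H M)
    (A B K : V) (hadj : H.adj A B) (hcirc : H.mark B A = Mark.circle)
    (p : ℕ → V) (n : ℕ) (hn : 1 ≤ n)
    (hpath : H.IsPossDirPathOn p n) (hunc : H.UncoveredOn p n)
    (hA : p 0 = A) (hB : p 1 = B) (hK : p n = K)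
    (hanc : H.AncSet K (H.SA A)) :
    M.mark B A = Mark.arrow ∧ ¬ M.dir A B := by
  obtain ⟨hadjM, hmark, hmix, hances, hcol⟩ := hHM
  have hdirM : ∀ a b, H.dir a b → M.dir a b := by
    rintro a b ⟨h1, h2, h3⟩
    refine ⟨(hadjM a b).2 h1, ?_, ?_⟩
    · rw [hmark b a (H.symm _ _ h1) (by rw [h2]; decide), h2]
    · rw [hmark a b h1 (by rw [h3]; decide), h3]
  have tailDir : ∀ a b, M.adj a b → M.mark b a ≠ Mark.arrow → M.dir a b := by
    intro a b h1 h2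
    have h3 := hmix b a (M.symm _ _ h1)
    have h4 := hmix a b h1
    have h5 := M.noDoubleTail a b h1
    refine ⟨h1, ?_, ?_⟩
    · cases h : M.mark b a <;> simp_all
    · cases h : M.mark b a <;> cases h' : M.mark a b <;> simp_all
  have key : ¬ M.dir A B := by
    intro hd
    have hstep : ∀ i, i < n → M.dir (p i) (p (i+1)) := by
      intro i
      induction i with
      | zero => intro _; simpa [hA, hB] using hd
      | succ i ih =>
        intro hi
        have hprev := ih (by omega)
        have he := hpath.2 (i+1) hi
        have hadj2 : M.adj (p (i+1)) (p (i+1+1)) := (hadjM _ _).2 he.1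
        refine tailDir _ _ hadj2 ?_
        intro harr
        have hc := hcol (p i) (p (i+1)) (p (i+2)) ⟨?_, hprev.1, M.symm _ _ hadj2, ?_,
          hprev.2.2, harr⟩
        · exact he.2.1 hc.2.2.2.2.2
        · intro h
          have := hpath.1 i (by omega) (i+2) (by omega) h
          omega
        · intro h
          exact hunc i (by omega) ((hadjM _ _).1 h)
    have hBK : ∀ m, m + 1 ≤ n → M.Anc B (p (m+1)) := by
      intro m
      induction m with
      | zero => intro _; simp only [Nat.zero_add, hB]; exact Relation.ReflTransGen.refl
      | succ m ih =>
        intro hm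
        exact Relation.ReflTransGen.tail (ih (by omega)) (hstep (m+1) (by omega))
    have hBK' : M.Anc B K := by
      have := hBK (n-1) (by omega)
      rwa [Nat.sub_add_cancel hn, hK] at this
    obtain ⟨v, hv, hKv⟩ := hanc
    have hKvM : M.Anc K v := Relation.ReflTransGen.mono hdirM _ _ hKv
    have hBv : M.Anc B v := Relation.ReflTransGen.trans hBK' hKvM
    rcases hv with hv | ⟨hv1, hv2⟩
    · have hv' : v = A := hv
      subst hv'
      refine (hances B v hBv ?_).1 hd
      rintro rfl
      exact H.irrefl _ hadj
    · have hAv : M.Anc A v := Relation.ReflTransGen.head hd hBv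
      have hne : A ≠ v := by
        rintro rfl
        exact H.irrefl _ hv1
      have hvm : M.mark v A = Mark.arrow := by
        rw [hmark v A hv1 (by rw [hv2]; decide), hv2]
      have hadv : M.adj v A := (hadjM _ _).2 hv1
      have h := hances A v hAv hne
      by_cases hx : M.mark A v = Mark.arrow
      · exact h.2 ⟨M.symm _ _ hadv, hvm, hx⟩
      · exact h.1 (tailDir v A hadv hx)
  refine ⟨?_, key⟩
  by_contra hna
  exact key (tailDir A B ((hadjM _ _).2 hadj) hna)
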